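/- Let 𝒫 = {P_1, P_2} be a two-element Borel partition of X such that h_μ(𝒫) > 0. Then there exists ε > 0 such that the pair 𝑨 = (A_1, A_2) satisfies I̲_μ(𝑨) > 0 whenever A_1 ⊆ P_1 and A_2 ⊆ P_2 are Borel sets with μ(P_1 ∖ A_1) < ε and μ(P_2 ∖ A_2) < ε. -/

import Mathlib

open MeasureTheory Set
open scoped Classical ENNReal

/-- `F` is a nonempty `(K,δ)`-invariant finite subset of the group `G`. -/
def FolnerInv {G : Type*} [Group G] (K : Finset G) (δ : ℝ) (F : Finset G) : Prop :=
  F.Nonempty ∧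
    (1 - δ) * (F.card : ℝ) ≤ (((F : Set G)) ∩ {s : G | ∀ g ∈ K, g * s ∈ F}).ncard

/-- The Følner characterisation of amenability for a discrete group `G`. -/
def FolnerAmenable (G : Type*) [Group G] : Prop :=
  ∀ (K : Finset G) (δ : ℝ), 0 < δ → ∃ F : Finset G, FolnerInv K δ F

/-- The limit supremum of `ψ F / |F|` as `F` becomes more and more invariant. -/
noncomputable def invLimsup {G : Type*} [Group G] (ψ : Finset G → ℝ) : ℝ :=
  ⨅ (K : Finset G) (δ : {d : ℝ // 0 < d}),
    sSup ((fun F : Finset G => ψ F / (F.card : ℝ)) '' {F : Finset G | FolnerInv K δ.1 F})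

/-- The limit infimum of `ψ F / |F|` as `F` becomes more and more invariant. -/
noncomputable def invLiminf {G : Type*} [Group G] (ψ : Finset G → ℝ) : ℝ :=
  ⨆ (K : Finset G) (δ : {d : ℝ // 0 < d}),
    sInf ((fun F : Finset G => ψ F / (F.card : ℝ)) '' {F : Finset G | FolnerInv K δ.1 F})

/-- `J ⊆ G` is an independence set for the tuple `A` of subsets of `X` relative to the
map `D : G → Set X`. -/
def IndepRel {G X : Type*} [Group G] [MulAction G X] {k : ℕ} (A : Fin k → Set X)
    (D : G → Set X) (J : Set G) : Prop :=
  ∀ F : Finset G, (F : Set G) ⊆ J → F.Nonempty → ∀ σ : G → Fin k,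
    (⋂ s ∈ F, (D s ∩ (fun x => s • x) ⁻¹' A (σ s))).Nonempty

/-- `J ⊆ G` is an independence set for the tuple `A` relative to the subset `D ⊆ X`. -/
def IndepSet {G X : Type*} [Group G] [MulAction G X] {k : ℕ} (A : Fin k → Set X)
    (D : Set X) (J : Set G) : Prop :=
  IndepRel A (fun _ => D) J

/-- The maximum of `|F ∩ J|` over independence sets `J` for `A` relative to `D`. -/
noncomputable def maxIndep {G X : Type*} [Group G] [MulAction G X] {k : ℕ}
    (A : Fin k → Set X) (D : G → Set X) (F : Finset G) : ℕ :=
  sSup {m : ℕ | ∃ J : Set G, IndepRel A D J ∧ m = (((F : Set G)) ∩ J).ncard}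

/-- `φ_{A,δ}(F)`: the minimum over Borel sets `D` with `μ(D) ≥ 1 - δ` of the maximum
of `|F ∩ J|` over independence sets `J` for `A` relative to `D`. -/
noncomputable def phiConst {G X : Type*} [Group G] [MulAction G X] [MeasurableSpace X]
    (μ : Measure X) {k : ℕ} (A : Fin k → Set X) (δ : ℝ) (F : Finset G) : ℕ :=
  sInf {m : ℕ | ∃ D : Set X, MeasurableSet D ∧ 1 - δ ≤ (μ D).toReal ∧
    m = maxIndep A (fun _ : G => D) F}

/-- `φ'_{A,δ}(F)`: as `phiConst` but with maps `D : G → Set X` with `μ(D s) ≥ 1 - δ`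
for all `s`. -/
noncomputable def phiMap {G X : Type*} [Group G] [MulAction G X] [MeasurableSpace X]
    (μ : Measure X) {k : ℕ} (A : Fin k → Set X) (δ : ℝ) (F : Finset G) : ℕ :=
  sInf {m : ℕ | ∃ D : G → Set X, (∀ s, MeasurableSet (D s)) ∧
    (∀ s, 1 - δ ≤ (μ (D s)).toReal) ∧ m = maxIndep A D F}

/-- The upper `μ`-independence density `Ī_μ(A)` of the tuple `A`. -/
noncomputable def upperIndepDens (G : Type*) {X : Type*} [Group G] [MulAction G X]
    [MeasurableSpace X] (μ : Measure X) {k : ℕ} (A : Fin k → Set X) : ℝ :=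
  ⨆ δ : {d : ℝ // 0 < d}, invLimsup (fun F : Finset G => (phiConst μ A δ.1 F : ℝ))

/-- The lower `μ`-independence density `I̲_μ(A)` of the tuple `A`. -/
noncomputable def lowerIndepDens (G : Type*) {X : Type*} [Group G] [MulAction G X]
    [MeasurableSpace X] (μ : Measure X) {k : ℕ} (A : Fin k → Set X) : ℝ :=
  ⨆ δ : {d : ℝ // 0 < d}, invLiminf (fun F : Finset G => (phiConst μ A δ.1 F : ℝ))

/-- The measure `μ` is invariant under the action of `G`. -/
def InvariantMeasure (G : Type*) {X : Type*} [Group G] [MulAction G X] [MeasurableSpace X]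
    (μ : Measure X) : Prop :=
  ∀ (s : G) (B : Set X), MeasurableSet B → μ ((fun x => s • x) ⁻¹' B) = μ B

/-- The entropy `H_μ(𝒫^F)` of the join `⋁_{s ∈ F} s⁻¹𝒫` of the finite partition `P`. -/
noncomputable def HJoin {G X : Type*} [Group G] [MulAction G X] [MeasurableSpace X]
    (μ : Measure X) {k : ℕ} (P : Fin k → Set X) (F : Finset G) : ℝ :=
  ∑ f : ↥F → Fin k,
    Real.negMulLog (μ (⋂ s : ↥F, (fun x => (s : G) • x) ⁻¹' P (f s))).toReal

/-- `P` is a finite measurable partition of `X` (members may be empty). -/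
def IsMeasPartition {X : Type*} [MeasurableSpace X] {k : ℕ} (P : Fin k → Set X) : Prop :=
  (∀ i, MeasurableSet (P i)) ∧ (Pairwise fun i j => Disjoint (P i) (P j)) ∧
    (⋃ i, P i) = Set.univ

/-- `x` is a (topological) IE-tuple for the action of `G` on `X`. -/
def IsIETuple (G : Type*) {X : Type*} [Group G] [TopologicalSpace X] [MulAction G X]
    {k : ℕ} (x : Fin k → X) : Prop :=
  ∀ U : Fin k → Set X, (∀ i, U i ∈ nhds (x i)) →
    ∃ d : ℝ, 0 < d ∧ ∀ (K : Finset G) (δ : ℝ), 0 < δ →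
      ∃ (F : Finset G) (J : Set G), FolnerInv K δ F ∧ IndepSet U (Set.univ : Set X) J ∧
        d * (F.card : ℝ) ≤ (((F : Set G)) ∩ J).ncard

/-- `x` is a `μ`-IE-tuple. -/
def IsMuIETuple (G : Type*) {X : Type*} [Group G] [TopologicalSpace X] [MulAction G X]
    [MeasurableSpace X] (μ : Measure X) {k : ℕ} (x : Fin k → X) : Prop :=
  ∀ U : Fin k → Set X, (∀ i, U i ∈ nhds (x i)) → 0 < upperIndepDens G μ U

section RealInequalities

open Real

/-- The log-sum inequality for two terms. -/
lemma log_sum_inequality {x y a b : ℝ} (hx : 0 ≤ x) (hy : 0 ≤ y) (hxa : x ≤ a) (hyb : y ≤ b) :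
    (x + y) * (log (x + y) - log (a + b)) ≤ x * (log x - log a) + y * (log y - log b) := by
  have key : ∀ z c : ℝ, 0 ≤ z → z ≤ c → 0 < x + y → c ≤ a + b →
      z * (log (x + y) + log c - log (a + b) - log z) ≤ (x + y) * c / (a + b) - z := by
    intro z c hz hzc hxy hc
    rcases hz.eq_or_lt with rfl | hz
    · have : 0 ≤ (x + y) * c / (a + b) := by
        apply div_nonneg <;> nlinarith
      simpa using this
    · have hc0 : 0 < c := by linarith
      have hab : 0 < a + b := by linarith
      have h := log_le_sub_one_of_pos (x := (x + y) * c / ((a + b) * z)) (by positivity)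
      rw [log_div (by positivity) (by positivity), log_mul (by positivity) (by positivity),
        log_mul (by positivity) (by positivity)] at h
      have h2 := mul_le_mul_of_nonneg_left h hz.le
      have h3 : z * ((x + y) * c / ((a + b) * z) - 1) = (x + y) * c / (a + b) - z := by
        field_simp
      rw [h3] at h2
      linarith
  rcases (add_nonneg hx hy).eq_or_lt with h0 | h0
  · have hx0 : x = 0 := by linarith
    have hy0 : y = 0 := by linarith
    simp [hx0, hy0]
  · have h1 := key x a hx hxa h0 (by linarith)
    have h2 := key y b hy hyb h0 (by linarith)
    have h3 : (x + y) * a / (a + b) + (x + y) * b / (a + b) = x + y := by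
      have : a + b ≠ 0 := by linarith
      field_simp
    linarith

/-- The entropy gained when a mass `u + v` is split into `u` and `v`. -/
noncomputable def splitGain (u v : ℝ) : ℝ := negMulLog u + negMulLog v - negMulLog (u + v)

lemma splitGain_nonneg {u v : ℝ} (hu : 0 ≤ u) (hv : 0 ≤ v) : 0 ≤ splitGain u v := by
  have key : ∀ z w : ℝ, 0 ≤ z → 0 ≤ w → z * log z ≤ z * log (z + w) := by
    intro z w hz hw
    rcases hz.eq_or_lt with rfl | hz
    · simp
    · exact mul_le_mul_of_nonneg_left (log_le_log hz (by linarith)) hz.le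
  have h1 := key u v hu hv
  have h2 := key v u hv hu
  rw [add_comm v u] at h2
  simp only [splitGain, negMulLog]
  linarith

lemma splitGain_superadditive {u v u' v' : ℝ} (hu : 0 ≤ u) (hv : 0 ≤ v) (hu' : 0 ≤ u')
    (hv' : 0 ≤ v') : splitGain u v + splitGain u' v' ≤ splitGain (u + u') (v + v') := by
  have h1 := log_sum_inequality hu hu' (a := u + v) (b := u' + v') (by linarith) (by linarith)
  have h2 := log_sum_inequality hv hv' (a := u + v) (b := u' + v') (by linarith) (by linarith)
  have h3 : u + u' + (v + v') = u + v + (u' + v') := by ring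
  simp only [splitGain, negMulLog, h3]
  linarith

lemma negMulLog_le_one_sub {p : ℝ} (hp : 0 ≤ p) : negMulLog p ≤ 1 - p := by
  rcases hp.eq_or_lt with rfl | hp
  · simp
  · have h := log_le_sub_one_of_pos (inv_pos.mpr hp)
    rw [log_inv] at h
    have h2 := mul_le_mul_of_nonneg_left h hp.le
    rw [mul_sub, mul_inv_cancel₀ hp.ne'] at h2
    simp only [negMulLog]
    linarith

lemma sum_negMulLog_le {ι : Type*} (S : Finset ι) (p : ι → ℝ) (hp : ∀ i ∈ S, 0 ≤ p i) :
    ∑ i ∈ S, negMulLog (p i) ≤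
      negMulLog (∑ i ∈ S, p i) + (∑ i ∈ S, p i) * log S.card := by
  set q := ∑ i ∈ S, p i with hq
  rcases (Finset.sum_nonneg hp).eq_or_lt with h0 | h0
  · have : ∀ i ∈ S, p i = 0 := (Finset.sum_eq_zero_iff_of_nonneg hp).1 h0.symm
    rw [← hq] at h0
    rw [← h0, Finset.sum_congr rfl fun i hi => by rw [this i hi]]
    simp
  · rw [← hq] at h0
    have hS : S.Nonempty := by
      by_contra h
      rw [Finset.not_nonempty_iff_eq_empty] at h
      simp [hq, h] at h0
    have hn : (0 : ℝ) < S.card := by exact_mod_cast hS.card_pos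
    have key : ∀ i ∈ S, negMulLog (p i) ≤ q / S.card - p i - p i * (log q - log S.card) := by
      intro i hi
      rcases (hp i hi).eq_or_lt with h | h
      · rw [← h]; simp; positivity
      · have h1 := log_le_sub_one_of_pos (x := q / (S.card * p i)) (by positivity)
        rw [log_div (by positivity) (by positivity), log_mul (by positivity) (by positivity)] at h1
        have h2 := mul_le_mul_of_nonneg_left h1 h.le
        have h3 : p i * (q / (S.card * p i) - 1) = q / S.card - p i := by field_simp
        rw [h3] at h2
        simp only [negMulLog]
        linarith
    refine (Finset.sum_le_sum key).trans ?_
    rw [Finset.sum_sub_distrib, Finset.sum_sub_distrib, ← Finset.sum_mul, ← hq]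
    simp only [Finset.sum_const, nsmul_eq_mul, negMulLog]
    have : (S.card : ℝ) * (q / S.card) = q := by field_simp
    linarith

lemma exists_binary_entropy_bound {c : ℝ} (hc : 0 < c) :
    ∃ τ : ℝ, 0 < τ ∧ ∀ q : ℝ, 0 ≤ q → q ≤ τ → q + negMulLog q + q * log 2 < c := by
  have hcont : Continuous fun q : ℝ => q + negMulLog q + q * log 2 := by
    have := continuous_negMulLog
    fun_prop
  have h : ∀ᶠ q in nhds (0 : ℝ), q + negMulLog q + q * log 2 < c :=
    hcont.continuousAt.eventually_lt continuousAt_const (by simpa using hc)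
  obtain ⟨r, hr, hball⟩ := Metric.eventually_nhds_iff.1 h
  refine ⟨r / 2, by positivity, fun q hq0 hq => hball ?_⟩
  rw [Real.dist_eq, sub_zero, abs_of_nonneg hq0]
  linarith

/-- A finite set of size `n` has at most `exp (κ n)` subsets of size at most `η n`. -/
lemma exists_card_small_subsets_le (α : Type*) {κ : ℝ} (hκ : 0 < κ) :
    ∃ η : ℝ, 0 < η ∧ ∀ F : Finset α,
      ((F.powerset.filter fun T => (T.card : ℝ) ≤ η * F.card).card : ℝ) ≤
        exp (κ * F.card) := by
  obtain ⟨L, hL0, hL⟩ : ∃ L : ℝ, 0 < L ∧ exp (-L) ≤ κ / 2 := by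
    refine ⟨max 1 (-log (κ / 2)), by positivity, ?_⟩
    rw [← exp_log (show 0 < κ / 2 by positivity), exp_le_exp, exp_log (by positivity)]
    have := le_max_right 1 (-log (κ / 2))
    linarith
  refine ⟨κ / (2 * L), by positivity, fun F => ?_⟩
  have h1 : ((F.powerset.filter fun T => (T.card : ℝ) ≤ κ / (2 * L) * F.card).card : ℝ) ≤
      ∑ T ∈ F.powerset, exp (κ / 2 * F.card) * exp (-L) ^ T.card := by
    rw [Finset.card_filter]
    push_cast
    refine Finset.sum_le_sum fun T _ => ?_
    split_ifs with h
    · rw [← exp_nat_mul, ← exp_add]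
      apply one_le_exp
      have h2 := mul_le_mul_of_nonneg_left h hL0.le
      have h3 : L * (κ / (2 * L) * F.card) = κ / 2 * F.card := by field_simp
      rw [h3] at h2
      linarith
    · positivity
  have h2 := Finset.sum_pow_mul_eq_add_pow (exp (-L)) 1 F
  simp only [one_pow, mul_one] at h2
  rw [← Finset.mul_sum, h2] at h1
  refine h1.trans ?_
  have h3 : exp (-L) + 1 ≤ exp (κ / 2) := by
    have := add_one_le_exp (κ / 2)
    linarith
  calc exp (κ / 2 * F.card) * (exp (-L) + 1) ^ F.card
      ≤ exp (κ / 2 * F.card) * exp (κ / 2) ^ F.card := by gcongr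
    _ = exp (κ * F.card) := by
      rw [← exp_nat_mul, ← exp_add]
      ring_nf

end RealInequalities

/-- If the pairs `(w x, b x)`, `x ∈ D`, consist of subsets of `F` with `b x` in `𝓑`, and for each `B`
in `𝓑` the family `{w x : b x = B}` only shatters members of `𝓢`, then `w` takes at most
`#𝓑 * #𝓢` values on `D`. -/
lemma card_names_le {α X : Type*} (F : Finset α) (𝓑 𝓢 : Finset (Finset α)) (D : Set X)
    (w b : X → Finset α) (hb : ∀ x ∈ D, b x ∈ 𝓑)
    (hsh : ∀ B ∈ 𝓑, ∀ J ⊆ F,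
      (F.powerset.filter fun T => ∃ x ∈ D, w x = T ∧ b x = B).Shatters J → J ∈ 𝓢) :
    (F.powerset.filter fun T => ∃ x ∈ D, w x = T).card ≤ 𝓑.card * 𝓢.card := by
  refine le_trans (Finset.card_le_card ?_) (Finset.card_biUnion_le_card_mul 𝓑
    (fun B => F.powerset.filter fun T => ∃ x ∈ D, w x = T ∧ b x = B) 𝓢.card ?_)
  · intro T hT
    obtain ⟨hTF, x, hx, hw⟩ := Finset.mem_filter.1 hT
    exact Finset.mem_biUnion.2 ⟨b x, hb x hx, Finset.mem_filter.2 ⟨hTF, x, hx, hw, rfl⟩⟩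
  · intro B hB
    refine (Finset.card_le_card_shatterer _).trans (Finset.card_le_card fun J hJ => ?_)
    have hJ' := Finset.mem_shatterer.1 hJ
    refine hsh B hB J ?_ hJ'
    obtain ⟨u, hu, hJu⟩ := hJ' subset_rfl
    exact (Finset.inter_eq_left.1 hJu).trans
      (Finset.mem_powerset.1 (Finset.mem_filter.1 hu).1)

section JoinEntropy

variable {G X : Type*} [Group G] [MulAction G X]

/-- The itinerary of `x` along `F`: the set of `s ∈ F` with `s • x ∈ P`. -/
noncomputable def visits (P : Set X) (F : Finset G) (x : X) : Finset G :=
  F.filter fun s => s • x ∈ P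

lemma visits_subset (P : Set X) (F : Finset G) (x : X) : visits P F x ⊆ F :=
  Finset.filter_subset _ _

lemma mem_visits {P : Set X} {F : Finset G} {x : X} {s : G} :
    s ∈ visits P F x ↔ s ∈ F ∧ s • x ∈ P :=
  Finset.mem_filter

lemma visits_eq_iff {P : Set X} {F T : Finset G} (hT : T ⊆ F) {x : X} :
    visits P F x = T ↔ ∀ s ∈ F, (s • x ∈ P ↔ s ∈ T) := by
  simp only [visits, Finset.ext_iff, Finset.mem_filter]
  constructor
  · intro h s hs
    simpa [hs] using h s
  · intro h s
    by_cases hs : s ∈ F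
    · simpa [hs] using h s hs
    · simpa [hs] using fun h' => hs (hT h')

variable [MeasurableSpace X]

lemma measurableSet_visits_eq (hact : ∀ s : G, Measurable fun x : X => s • x) {P : Set X}
    (hP : MeasurableSet P) (F T : Finset G) : MeasurableSet {x | visits P F x = T} := by
  by_cases hT : T ⊆ F
  · have : {x | visits P F x = T} = ⋂ s ∈ F, {x | s • x ∈ P ↔ s ∈ T} := by
      ext x
      simp [visits_eq_iff hT]
    rw [this]
    refine Finset.measurableSet_biInter F fun s _ => ?_
    by_cases hs : s ∈ T
    · simp only [hs, iff_true]
      exact hact s hP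
    · simp only [hs, iff_false]
      exact (hact s hP).compl
  · have : {x | visits P F x = T} = ∅ := by
      ext x
      simp only [mem_ofPred_eq, mem_empty_iff_false, iff_false]
      rintro rfl
      exact hT (visits_subset _ _ _)
    rw [this]
    exact MeasurableSet.empty

lemma sum_measureReal_visits_inter (hact : ∀ s : G, Measurable fun x : X => s • x)
    (μ : Measure X) [IsFiniteMeasure μ] {P D : Set X} (hP : MeasurableSet P)
    (hD : MeasurableSet D) (F : Finset G) :
    ∑ T ∈ F.powerset, μ.real ({x | visits P F x = T} ∩ D) = μ.real D := by
  rw [← measureReal_biUnion_finset]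
  · congr 1
    ext x
    simp [visits_subset]
  · intro T _ T' _ hne
    refine Set.disjoint_left.2 fun x hx hx' => hne ?_
    exact hx.1.symm.trans hx'.1
  · exact fun T _ => (measurableSet_visits_eq hact hP F T).inter hD

/-- The entropy of the join of the translates of the partition `{P, Pᶜ}` along `F`. -/
noncomputable def joinEntropy (μ : Measure X) (P : Set X) (F : Finset G) : ℝ :=
  ∑ T ∈ F.powerset, Real.negMulLog (μ.real {x | visits P F x = T})

lemma HJoin_eq_joinEntropy (μ : Measure X) {P Q : Set X} (hdisj : Disjoint P Q)
    (hcov : P ∪ Q = univ) (F : Finset G) : HJoin μ ![P, Q] F = joinEntropy μ P F := by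
  have hQ : ∀ x, x ∈ Q ↔ x ∉ P := fun x =>
    ⟨fun hx hx' => Set.disjoint_left.1 hdisj hx' hx, fun hx =>
      ((Set.eq_univ_iff_forall.1 hcov x).resolve_left hx)⟩
  refine Finset.sum_nbij' (fun f => (Finset.univ.filter fun s => f s = 0).map
      (Function.Embedding.subtype _)) (fun T s => if (s : G) ∈ T then 0 else 1) ?_ ?_ ?_ ?_ ?_
  · intro f _
    rw [Finset.mem_powerset]
    intro s hs
    obtain ⟨t, -, rfl⟩ := Finset.mem_map.1 hs
    exact t.2
  · simp
  · intro f _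
    ext s
    rcases Fin.exists_fin_two.1 ⟨f s, rfl⟩ with h | h <;> simp [h]
  · intro T hT
    ext s
    simpa using fun hs => Finset.mem_powerset.1 hT hs
  · intro f _
    congr 2
    congr 1
    ext x
    rw [mem_ofPred_eq, visits_eq_iff]
    · simp only [mem_iInter, mem_preimage, Subtype.forall]
      refine forall₂_congr fun s hs => ?_
      rcases Fin.exists_fin_two.1 ⟨f ⟨s, hs⟩, rfl⟩ with h | h <;> simp [h, hs, hQ]
    · intro s hs
      obtain ⟨t, -, rfl⟩ := Finset.mem_map.1 hs
      exact t.2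

lemma joinEntropy_nonneg (μ : Measure X) [IsProbabilityMeasure μ] (P : Set X) (F : Finset G) :
    0 ≤ joinEntropy μ P F :=
  Finset.sum_nonneg fun _ _ => Real.negMulLog_nonneg measureReal_nonneg measureReal_le_one

lemma joinEntropy_le (hact : ∀ s : G, Measurable fun x : X => s • x) (μ : Measure X)
    [IsProbabilityMeasure μ] {P : Set X} (hP : MeasurableSet P) (F : Finset G) :
    joinEntropy μ P F ≤ F.card * Real.log 2 := by
  have h := sum_negMulLog_le F.powerset (fun T => μ.real {x | visits P F x = T})
    fun _ _ => measureReal_nonneg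
  have h1 := sum_measureReal_visits_inter hact μ hP MeasurableSet.univ F
  simp only [inter_univ, probReal_univ] at h1
  rw [h1] at h
  simpa [joinEntropy] using h

lemma joinEntropy_image_mul_right (hact : ∀ s : G, Measurable fun x : X => s • x)
    {μ : Measure X} (hinv : InvariantMeasure G μ) {P : Set X} (hP : MeasurableSet P)
    (E : Finset G) (g : G) : joinEntropy μ P (E.image (· * g)) = joinEntropy μ P E := by
  symm
  refine Finset.sum_nbij' (fun T => T.image (· * g)) (fun T => T.image (· * g⁻¹)) ?_ ?_ ?_ ?_ ?_
  · intro T hT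
    rw [Finset.mem_powerset] at hT ⊢
    exact Finset.image_subset_image hT
  · intro T hT
    rw [Finset.mem_powerset] at hT ⊢
    intro s hs
    obtain ⟨t, ht, rfl⟩ := Finset.mem_image.1 hs
    obtain ⟨u, hu, rfl⟩ := Finset.mem_image.1 (hT ht)
    simpa using hu
  · intro T _
    simp only [Finset.image_image, Function.comp_def, mul_inv_cancel_right, Finset.image_id']
  · intro T _
    simp only [Finset.image_image, Function.comp_def, inv_mul_cancel_right, Finset.image_id']
  · intro T hT
    rw [Finset.mem_powerset] at hT
    rw [measureReal_def, measureReal_def, ← hinv g _ (measurableSet_visits_eq hact hP E T)]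
    congr 3
    ext x
    simp only [mem_preimage, mem_ofPred_eq]
    rw [visits_eq_iff hT, visits_eq_iff (Finset.image_subset_image hT)]
    simp only [Finset.forall_mem_image, mul_smul]
    refine forall₂_congr fun s _ => ?_
    rw [(mul_left_injective g).mem_finset_image]

lemma measureReal_visits_eq_add (hact : ∀ s : G, Measurable fun x : X => s • x)
    (μ : Measure X) [IsFiniteMeasure μ] {P : Set X} (hP : MeasurableSet P) {a : G}
    {B T : Finset G} (ha : a ∉ B) (hT : T ⊆ B) :
    μ.real {x | visits P B x = T} = μ.real {x | visits P (insert a B) x = T} +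
      μ.real {x | visits P (insert a B) x = insert a T} := by
  rw [← measureReal_union _ (measurableSet_visits_eq hact hP _ _)]
  · congr 1
    ext x
    simp only [mem_ofPred_eq, mem_union]
    rw [visits_eq_iff hT, visits_eq_iff (hT.trans (Finset.subset_insert a B)),
      visits_eq_iff (Finset.insert_subset_insert a hT)]
    have haT : a ∉ T := fun h => ha (hT h)
    have hne : ∀ s ∈ B, s ≠ a := fun s hs h => ha (h ▸ hs)
    have hins : (∀ s ∈ B, (s • x ∈ P ↔ s ∈ insert a T)) ↔ ∀ s ∈ B, (s • x ∈ P ↔ s ∈ T) :=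
      forall₂_congr fun s hs => by rw [Finset.mem_insert, or_iff_right (hne s hs)]
    simp only [Finset.forall_mem_insert, hins, haT, Finset.mem_insert_self]
    by_cases h : a • x ∈ P <;> simp [h]
  · refine Set.disjoint_left.2 fun x hx hx' => ?_
    have h : T = insert a T := hx.symm.trans hx'
    exact ha (hT (h ▸ Finset.mem_insert_self a T))

lemma joinEntropy_insert_sub (hact : ∀ s : G, Measurable fun x : X => s • x)
    (μ : Measure X) [IsFiniteMeasure μ] {P : Set X} (hP : MeasurableSet P) {a : G}
    {B : Finset G} (ha : a ∉ B) :
    joinEntropy μ P (insert a B) - joinEntropy μ P B =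
      ∑ T ∈ B.powerset, splitGain (μ.real {x | visits P (insert a B) x = T})
        (μ.real {x | visits P (insert a B) x = insert a T}) := by
  rw [joinEntropy, joinEntropy, Finset.sum_powerset_insert ha, ← Finset.sum_add_distrib,
    ← Finset.sum_sub_distrib]
  refine Finset.sum_congr rfl fun T hT => ?_
  rw [measureReal_visits_eq_add hact μ hP ha (Finset.mem_powerset.1 hT), splitGain]

lemma joinEntropy_insert_sub_insert_le (hact : ∀ s : G, Measurable fun x : X => s • x)
    (μ : Measure X) [IsFiniteMeasure μ] {P : Set X} (hP : MeasurableSet P) {a b : G}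
    {A : Finset G} (ha : a ∉ insert b A) (hb : b ∉ A) :
    joinEntropy μ P (insert a (insert b A)) - joinEntropy μ P (insert b A) ≤
      joinEntropy μ P (insert a A) - joinEntropy μ P A := by
  have haA : a ∉ A := fun h => ha (Finset.mem_insert_of_mem h)
  have hab : a ≠ b := fun h => ha (h ▸ Finset.mem_insert_self _ _)
  rw [joinEntropy_insert_sub hact μ hP ha, joinEntropy_insert_sub hact μ hP haA,
    Finset.sum_powerset_insert hb, ← Finset.sum_add_distrib]
  refine Finset.sum_le_sum fun T hT => ?_
  have hT := Finset.mem_powerset.1 hT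
  have hb' : b ∉ insert a A := by simp [hab.symm, hb]
  rw [measureReal_visits_eq_add hact μ hP hb' (hT.trans (Finset.subset_insert a A)),
    measureReal_visits_eq_add hact μ hP hb' (Finset.insert_subset_insert a hT),
    Finset.insert_comm b a A, Finset.insert_comm b a T]
  exact splitGain_superadditive measureReal_nonneg measureReal_nonneg measureReal_nonneg
    measureReal_nonneg

lemma joinEntropy_insert_sub_antitone (hact : ∀ s : G, Measurable fun x : X => s • x)
    (μ : Measure X) [IsFiniteMeasure μ] {P : Set X} (hP : MeasurableSet P) {a : G}
    {A B : Finset G} (hAB : A ⊆ B) (ha : a ∉ B) :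
    joinEntropy μ P (insert a B) - joinEntropy μ P B ≤
      joinEntropy μ P (insert a A) - joinEntropy μ P A := by
  have key : ∀ C : Finset G, a ∉ C ∪ A →
      joinEntropy μ P (insert a (C ∪ A)) - joinEntropy μ P (C ∪ A) ≤
        joinEntropy μ P (insert a A) - joinEntropy μ P A := by
    intro C
    induction C using Finset.induction_on with
    | empty => simp
    | insert b C _ ih =>
      intro h
      rw [Finset.insert_union] at h ⊢
      have ih := ih fun h' => h (Finset.mem_insert_of_mem h')
      by_cases hb : b ∈ C ∪ A
      · rwa [Finset.insert_eq_of_mem hb]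
      · exact (joinEntropy_insert_sub_insert_le hact μ hP h hb).trans ih
  have h := key B
  rw [Finset.union_eq_left.2 hAB] at h
  exact h ha

lemma joinEntropy_empty (μ : Measure X) [IsProbabilityMeasure μ] (P : Set X) :
    joinEntropy μ P (∅ : Finset G) = 0 := by
  simp [joinEntropy, visits]

/-- Shearer's inequality. -/
lemma shearer_joinEntropy (hact : ∀ s : G, Measurable fun x : X => s • x)
    (μ : Measure X) [IsProbabilityMeasure μ] {P : Set X} (hP : MeasurableSet P)
    {ι : Type*} (I : Finset ι) (S : ι → Finset G) (k : ℕ) (F : Finset G)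
    (hk : ∀ a ∈ F, k = (I.filter fun i => a ∈ S i).card) :
    k * joinEntropy μ P F ≤ ∑ i ∈ I, joinEntropy μ P (S i ∩ F) := by
  induction F using Finset.induction_on with
  | empty => simp [joinEntropy_empty]
  | insert a F ha ih =>
    have ih := ih fun b hb => hk b (Finset.mem_insert_of_mem hb)
    have hstep : (k : ℝ) * (joinEntropy μ P (insert a F) - joinEntropy μ P F) ≤
        ∑ i ∈ I, (joinEntropy μ P (S i ∩ insert a F) - joinEntropy μ P (S i ∩ F)) := by
      rw [hk a (Finset.mem_insert_self a F), Finset.card_filter]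
      push_cast
      rw [Finset.sum_mul]
      refine Finset.sum_le_sum fun i _ => ?_
      split_ifs with h
      · rw [one_mul, Finset.inter_insert_of_mem h]
        exact joinEntropy_insert_sub_antitone hact μ hP Finset.inter_subset_right ha
      · simp [Finset.inter_insert_of_notMem h]
    rw [Finset.sum_sub_distrib] at hstep
    linarith

/-- The normalised entropy along any nonempty set bounds from above the normalised entropy along
almost invariant sets. -/
lemma joinEntropy_le_of_folnerInv (hact : ∀ s : G, Measurable fun x : X => s • x)
    {μ : Measure X} [IsProbabilityMeasure μ] (hinv : InvariantMeasure G μ) {P : Set X}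
    (hP : MeasurableSet P) {E F : Finset G} (hE : E.Nonempty) {δ : ℝ} (hF : FolnerInv E δ F) :
    joinEntropy μ P F / F.card ≤ joinEntropy μ P E / E.card + δ * Real.log 2 := by
  set I : Finset G := (E ×ˢ F).image fun q => q.1⁻¹ * q.2
  set S : G → Finset G := fun g => E.image (· * g)
  have hmem : ∀ a g, a ∈ S g ↔ a * g⁻¹ ∈ E := by
    intro a g
    simp only [S, Finset.mem_image]
    exact ⟨fun ⟨e, he, h⟩ => by simpa [← h] using he, fun h => ⟨_, h, by simp⟩⟩
  have hcardS : ∀ g, (S g).card = E.card := fun g =>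
    Finset.card_image_of_injective _ (mul_left_injective g)
  have hk : ∀ a ∈ F, E.card = (I.filter fun g => a ∈ S g).card := by
    intro a ha
    refine Finset.card_nbij' (fun e => e⁻¹ * a) (fun g => a * g⁻¹) ?_ ?_ ?_ ?_
    · intro e he
      have he : e ∈ E := he
      simp only [Finset.coe_filter, mem_ofPred_eq, hmem]
      exact ⟨Finset.mem_image.2 ⟨(e, a), by simp [he, ha], rfl⟩, by simpa using he⟩
    · intro g hg
      simp only [Finset.coe_filter, mem_ofPred_eq, hmem] at hg
      exact hg.2
    · intro e _
      simp
    · intro g _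
      simp
  have hsh := shearer_joinEntropy hact μ hP I S E.card F hk
  have hsum : ∑ g ∈ I, ((S g ∩ F).card : ℝ) = E.card * F.card := by
    have h := Finset.sum_card_bipartiteAbove_eq_sum_card_bipartiteBelow
      (s := I) (t := F) fun g a => a ∈ S g
    have h1 : ∀ g ∈ I, (Finset.bipartiteAbove (fun g a => a ∈ S g) F g).card =
        (S g ∩ F).card := fun g _ => by
      rw [Finset.bipartiteAbove, Finset.filter_mem_eq_inter, Finset.inter_comm]
    have h2 : ∀ a ∈ F, (Finset.bipartiteBelow (fun g a => a ∈ S g) I a).card = E.card :=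
      fun a ha => (hk a ha).symm
    rw [Finset.sum_congr rfl h1, Finset.sum_congr rfl h2, Finset.sum_const, smul_eq_mul] at h
    rw [mul_comm]
    exact_mod_cast h
  set good : Finset G := F.filter fun s => ∀ g ∈ E, g * s ∈ F
  have hgood : (1 - δ) * F.card ≤ good.card := by
    refine hF.2.trans (le_of_eq ?_)
    rw [← Set.ncard_coe_finset]
    congr 2
    ext s
    simp [good]
  have hgI : good ⊆ I := by
    intro s hs
    obtain ⟨e, he⟩ := hE
    refine Finset.mem_image.2 ⟨(e, e * s), ?_, by simp⟩
    simp [he, (Finset.mem_filter.1 hs).2 e he]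
  have hSF : ∀ s ∈ good, S s ∩ F = S s := by
    intro s hs
    rw [Finset.inter_eq_left]
    intro t ht
    obtain ⟨e, he, rfl⟩ := Finset.mem_image.1 ht
    exact (Finset.mem_filter.1 hs).2 e he
  have hG : ∑ s ∈ good, joinEntropy μ P (S s ∩ F) = good.card * joinEntropy μ P E := by
    rw [Finset.sum_congr rfl fun s hs => by
      rw [hSF s hs, joinEntropy_image_mul_right hact hinv hP E s]]
    simp
  have hGc : ∑ s ∈ good, ((S s ∩ F).card : ℝ) = good.card * E.card := by
    rw [Finset.sum_congr rfl fun s hs => by rw [hSF s hs, hcardS s]]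
    simp
  have hB : ∑ s ∈ I \ good, joinEntropy μ P (S s ∩ F) ≤
      (∑ s ∈ I \ good, ((S s ∩ F).card : ℝ)) * Real.log 2 := by
    rw [Finset.sum_mul]
    exact Finset.sum_le_sum fun s _ => joinEntropy_le hact μ hP _
  rw [← Finset.sum_sdiff hgI, hG] at hsh
  rw [← Finset.sum_sdiff hgI, hGc] at hsum
  have hn : (0 : ℝ) < F.card := by exact_mod_cast hF.1.card_pos
  have hm : (0 : ℝ) < E.card := by exact_mod_cast hE.card_pos
  have hle : (good.card : ℝ) ≤ F.card := by
    exact_mod_cast Finset.card_le_card (Finset.filter_subset _ _)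
  have h1 : (good.card : ℝ) * joinEntropy μ P E ≤ F.card * joinEntropy μ P E :=
    mul_le_mul_of_nonneg_right hle (joinEntropy_nonneg μ P E)
  have h2 : ∑ s ∈ I \ good, ((S s ∩ F).card : ℝ) ≤ δ * (E.card * F.card) := by
    nlinarith
  have h3 := mul_le_mul_of_nonneg_right h2 (Real.log_nonneg (by norm_num : (1 : ℝ) ≤ 2))
  rw [div_le_iff₀ hn]
  have h4 : (joinEntropy μ P E / E.card + δ * Real.log 2) * F.card =
      (F.card * joinEntropy μ P E + δ * (E.card * F.card) * Real.log 2) / E.card := by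
    field_simp
  rw [h4, le_div_iff₀ hm]
  linarith

lemma invLimsup_mul_card_le_joinEntropy (hact : ∀ s : G, Measurable fun x : X => s • x)
    {μ : Measure X} [IsProbabilityMeasure μ] (hinv : InvariantMeasure G μ) {P : Set X}
    (hP : MeasurableSet P) {E : Finset G} (hE : E.Nonempty) :
    invLimsup (fun F : Finset G => joinEntropy μ P F) * E.card ≤ joinEntropy μ P E := by
  have hm : (0 : ℝ) < E.card := by exact_mod_cast hE.card_pos
  rw [← le_div_iff₀ hm]
  have hnn : ∀ (K : Finset G) (δ : {d : ℝ // 0 < d}), 0 ≤ sSup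
      ((fun F : Finset G => joinEntropy μ P F / (F.card : ℝ)) ''
        {F : Finset G | FolnerInv K δ.1 F}) := by
    intro K δ
    refine Real.sSup_nonneg ?_
    rintro _ ⟨F, -, rfl⟩
    exact div_nonneg (joinEntropy_nonneg μ P F) (Nat.cast_nonneg _)
  have hlog : 0 < Real.log 2 := Real.log_pos (by norm_num)
  refine le_of_forall_pos_le_add fun r hr => ?_
  let δ : {d : ℝ // 0 < d} := ⟨r / Real.log 2, by positivity⟩
  have h1 : invLimsup (fun F : Finset G => joinEntropy μ P F) ≤
      ⨅ δ : {d : ℝ // 0 < d}, sSup ((fun F : Finset G => joinEntropy μ P F / (F.card : ℝ)) ''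
        {F : Finset G | FolnerInv E δ.1 F}) :=
    ciInf_le ⟨0, by rintro _ ⟨K, rfl⟩; exact Real.iInf_nonneg (hnn K)⟩ E
  refine h1.trans ((ciInf_le ⟨0, by rintro _ ⟨d, rfl⟩; exact hnn E d⟩ δ).trans ?_)
  refine Real.sSup_le ?_ (add_nonneg (div_nonneg (joinEntropy_nonneg μ P E) hm.le) hr.le)
  rintro _ ⟨F, hF, rfl⟩
  have h := joinEntropy_le_of_folnerInv hact hinv hP hE hF
  have h2 : δ.1 * Real.log 2 = r := div_mul_cancel₀ r hlog.ne'
  rwa [h2] at h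

end JoinEntropy

lemma card_mem_upperBounds_indep {G X : Type*} [Group G] [MulAction G X] {k : ℕ} (A : Fin k → Set X)
    (D : G → Set X) (F : Finset G) :
    F.card ∈ upperBounds
      {m : ℕ | ∃ J : Set G, IndepRel A D J ∧ m = ((F : Set G) ∩ J).ncard} := by
  rintro _ ⟨J, -, rfl⟩
  rw [← Set.ncard_coe_finset F]
  exact Set.ncard_le_ncard Set.inter_subset_left F.finite_toSet

section Counting

variable {G X : Type*} [Group G] [MulAction G X] [MeasurableSpace X]

/-- The entropy is controlled by the number of itineraries seen on a set `D` of large measure. -/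
lemma joinEntropy_le_log_card (hact : ∀ s : G, Measurable fun x : X => s • x) (μ : Measure X)
    [IsProbabilityMeasure μ] {P D : Set X} (hP : MeasurableSet P) (hD : MeasurableSet D)
    (F : Finset G) :
    joinEntropy μ P F ≤
      Real.log (F.powerset.filter fun T => ∃ x ∈ D, visits P F x = T).card +
        (μ.real Dᶜ + Real.negMulLog (μ.real Dᶜ) + μ.real Dᶜ * (F.card * Real.log 2)) := by
  set S := F.powerset.filter fun T => ∃ x ∈ D, visits P F x = T
  have hsplit : joinEntropy μ P F ≤
      ∑ T ∈ F.powerset, Real.negMulLog (μ.real ({x | visits P F x = T} ∩ D)) +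
        ∑ T ∈ F.powerset, Real.negMulLog (μ.real ({x | visits P F x = T} ∩ Dᶜ)) := by
    rw [joinEntropy, ← Finset.sum_add_distrib]
    refine Finset.sum_le_sum fun T _ => ?_
    rw [← measureReal_inter_add_sdiff (s := {x | visits P F x = T}) hD, Set.sdiff_eq]
    have := splitGain_nonneg (measureReal_nonneg (μ := μ) (s := {x | visits P F x = T} ∩ D))
      (measureReal_nonneg (μ := μ) (s := {x | visits P F x = T} ∩ Dᶜ))
    rw [splitGain] at this
    linarith
  have hzero : ∀ T ∈ F.powerset, T ∉ S → μ.real ({x | visits P F x = T} ∩ D) = 0 := by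
    intro T hT hTS
    have : {x | visits P F x = T} ∩ D = ∅ := by
      ext x
      simp only [mem_inter_iff, mem_ofPred_eq, mem_empty_iff_false, iff_false]
      rintro ⟨h, hx⟩
      exact hTS (Finset.mem_filter.2 ⟨hT, x, hx, h⟩)
    simp [this]
  have hsub : S ⊆ F.powerset := Finset.filter_subset _ _
  have hin : ∑ T ∈ F.powerset, Real.negMulLog (μ.real ({x | visits P F x = T} ∩ D)) ≤
      Real.negMulLog (μ.real D) + μ.real D * Real.log S.card := by
    have h := sum_negMulLog_le S (fun T => μ.real ({x | visits P F x = T} ∩ D))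
      fun _ _ => measureReal_nonneg
    rw [Finset.sum_subset hsub fun T hT hTS => hzero T hT hTS,
      Finset.sum_subset hsub fun T hT hTS => by rw [hzero T hT hTS, Real.negMulLog_zero],
      sum_measureReal_visits_inter hact μ hP hD] at h
    exact h
  have hout : ∑ T ∈ F.powerset, Real.negMulLog (μ.real ({x | visits P F x = T} ∩ Dᶜ)) ≤
      Real.negMulLog (μ.real Dᶜ) + μ.real Dᶜ * (F.card * Real.log 2) := by
    have h := sum_negMulLog_le F.powerset (fun T => μ.real ({x | visits P F x = T} ∩ Dᶜ))
      fun _ _ => measureReal_nonneg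
    rw [sum_measureReal_visits_inter hact μ hP hD.compl] at h
    simpa using h
  have h1 := negMulLog_le_one_sub (measureReal_nonneg (μ := μ) (s := D))
  rw [← probReal_compl_eq_one_sub hD] at h1
  have h2 : μ.real D * Real.log S.card ≤ Real.log S.card :=
    mul_le_of_le_one_left (Real.log_natCast_nonneg _) measureReal_le_one
  linarith

lemma measureReal_many_visits_le (hact : ∀ s : G, Measurable fun x : X => s • x) {μ : Measure X}
    [IsProbabilityMeasure μ] (hinv : InvariantMeasure G μ) {B : Set X} (hB : MeasurableSet B)
    {F : Finset G} (hF : F.Nonempty) (θ : ℝ) :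
    θ * μ.real {x | θ * F.card ≤ (visits B F x).card} ≤ μ.real B := by
  have hn : (0 : ℝ) < F.card := by exact_mod_cast hF.card_pos
  have hcard : ∀ x, ((visits B F x).card : ℝ) =
      ∑ s ∈ F, ((fun x => s • x) ⁻¹' B).indicator (fun _ => (1 : ℝ)) x := by
    intro x
    rw [visits, Finset.card_filter]
    push_cast
    refine Finset.sum_congr rfl fun s _ => ?_
    simp [Set.indicator_apply]
  have hinteg : ∀ s ∈ F, Integrable (((fun x => s • x) ⁻¹' B).indicator fun _ => (1 : ℝ)) μ :=
    fun s _ => (integrable_const 1).indicator (hact s hB)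
  have h := mul_meas_ge_le_integral_of_nonneg (μ := μ)
    (f := fun x => ((visits B F x).card : ℝ)) (Filter.Eventually.of_forall fun x => by positivity)
    (by simpa only [hcard] using integrable_finsetSum F hinteg) (θ * F.card)
  have hI : ∫ x, ((visits B F x).card : ℝ) ∂μ = F.card * μ.real B := by
    simp only [hcard]
    rw [integral_finsetSum F hinteg, Finset.sum_congr rfl fun s _ => by
      rw [integral_indicator (hact s hB), setIntegral_const, smul_eq_mul, mul_one,
        measureReal_def, hinv s B hB, ← measureReal_def]]
    simp
  rw [hI] at h
  refine le_of_mul_le_mul_left ?_ hn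
  linarith

/-- Along every nonempty finite set `F` there are independence sets relative to `D` of
proportional size, provided the relevant exceptional sets are small. -/
lemma exists_indepRel_of_joinEntropy (hact : ∀ s : G, Measurable fun x : X => s • x)
    {μ : Measure X} [IsProbabilityMeasure μ] (hinv : InvariantMeasure G μ) {P₁ P₂ : Set X}
    (hP₁ : MeasurableSet P₁) (hdisj : Disjoint P₁ P₂)
    {c η τ : ℝ} (hη : 0 < η) (hτ1 : τ ≤ 1)
    (hτ : ∀ q : ℝ, 0 ≤ q → q ≤ τ → q + Real.negMulLog q + q * Real.log 2 < c / 2)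
    {F : Finset G} (hF : F.Nonempty) (hent : c * F.card ≤ joinEntropy μ P₁ F)
    (hcount : ((F.powerset.filter fun T => (T.card : ℝ) ≤ η * F.card).card : ℝ) ≤
        Real.exp (c / 4 * F.card))
    {A₁ A₂ D : Set X} (hA₁ : MeasurableSet A₁) (hA₂ : MeasurableSet A₂) (hAP₁ : A₁ ⊆ P₁)
    (hAP₂ : A₂ ⊆ P₂) (hA : μ.real (A₁ ∪ A₂)ᶜ ≤ η / 2 * (τ / 2)) (hD : MeasurableSet D)
    (hDτ : μ.real Dᶜ ≤ τ / 2) :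
    ∃ J : Finset G, J ⊆ F ∧ IndepRel ![A₁, A₂] (fun _ : G => D) (J : Set G) ∧
      η / 2 * F.card ≤ J.card := by
  have hn : (1 : ℝ) ≤ F.card := by exact_mod_cast hF.card_pos
  set B := (A₁ ∪ A₂)ᶜ
  have hB : MeasurableSet B := (hA₁.union hA₂).compl
  set many : Set X := {x | η / 2 * F.card ≤ (visits B F x).card}
  have hmany : MeasurableSet many := by
    have : many = ⋃ T ∈ F.powerset.filter fun T => η / 2 * F.card ≤ T.card,
        {x | visits B F x = T} := by
      ext x
      simp [many, visits_subset]
    rw [this]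
    exact Finset.measurableSet_biUnion _ fun T _ => measurableSet_visits_eq hact hB F T
  have hmanyle : μ.real many ≤ τ / 2 :=
    le_of_mul_le_mul_left ((measureReal_many_visits_le hact hinv hB hF (η / 2)).trans hA)
      (by positivity)
  set D' := D ∩ manyᶜ
  have hD' : MeasurableSet D' := hD.inter hmany.compl
  have hq : μ.real D'ᶜ ≤ τ := by
    rw [Set.compl_inter, compl_compl]
    linarith [measureReal_union_le (μ := μ) Dᶜ many]
  have hq0 : 0 ≤ μ.real D'ᶜ := measureReal_nonneg
  have hcard := joinEntropy_le_log_card hact μ hP₁ hD' F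
  have hqb := hτ _ hq0 hq
  have hneg := Real.negMulLog_nonneg hq0 (hq.trans hτ1)
  set 𝓢 := F.powerset.filter fun T => (T.card : ℝ) ≤ η * F.card
  obtain ⟨b, J, hJF, hJ, hbJ, hb⟩ : ∃ b J : Finset G, J ⊆ F ∧ (F.powerset.filter fun T =>
      ∃ x ∈ D', visits P₁ F x = T ∧ visits B F x = b).Shatters J ∧
      η * F.card < J.card ∧ (b.card : ℝ) ≤ η / 2 * F.card := by
    by_contra! hcon
    have hN := card_names_le F (F.powerset.filter fun T => (T.card : ℝ) ≤ η / 2 * F.card) 𝓢 D'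
      (visits P₁ F) (visits B F)
      (fun x hx => Finset.mem_filter.2 ⟨Finset.mem_powerset.2 (visits_subset _ _ _),
        (lt_of_not_ge fun h => hx.2 h).le⟩)
      (fun b hb J hJF hJ => Finset.mem_filter.2 ⟨Finset.mem_powerset.2 hJF, by
        by_contra! hlt
        exact absurd (hcon b J hJF hJ hlt) (not_lt.2 (Finset.mem_filter.1 hb).2)⟩)
    have hle : (F.powerset.filter fun T => (T.card : ℝ) ≤ η / 2 * F.card).card ≤ 𝓢.card := by
      refine Finset.card_le_card fun T hT => ?_
      rw [Finset.mem_filter] at hT ⊢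
      exact ⟨hT.1, hT.2.trans (by nlinarith)⟩
    set N := (F.powerset.filter fun T => ∃ x ∈ D', visits P₁ F x = T).card
    have hN2 : (N : ℝ) ≤ Real.exp (c / 2 * F.card) := by
      calc (N : ℝ) ≤ 𝓢.card * 𝓢.card := by
            exact_mod_cast hN.trans (Nat.mul_le_mul_right _ hle)
        _ ≤ Real.exp (c / 4 * F.card) * Real.exp (c / 4 * F.card) := by gcongr
        _ = Real.exp (c / 2 * F.card) := by rw [← Real.exp_add]; ring_nf
    have hc : 0 < c := by
      have := Real.log_nonneg (by norm_num : (1 : ℝ) ≤ 2)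
      nlinarith [mul_nonneg hq0 this]
    have hlog : Real.log N ≤ c / 2 * F.card := by
      rcases Nat.eq_zero_or_pos N with h0 | h0
      · rw [h0]
        simp only [Nat.cast_zero, Real.log_zero]
        positivity
      · rw [Real.log_le_iff_le_exp (by exact_mod_cast h0)]
        exact hN2
    nlinarith
  refine ⟨J \ b, Finset.sdiff_subset.trans hJF, ?_, ?_⟩
  · intro E hE hEne σ
    obtain ⟨u, hu, hJu⟩ := hJ (Finset.filter_subset (fun s => σ s = 0) J)
    obtain ⟨-, x, hx, rfl, rfl⟩ := Finset.mem_filter.1 hu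
    refine ⟨x, Set.mem_iInter₂.2 fun s hs => ⟨hx.1, ?_⟩⟩
    obtain ⟨hsJ, hsb⟩ := Finset.mem_sdiff.1 (hE hs)
    have hsF := hJF hsJ
    have hsA : s • x ∈ A₁ ∪ A₂ := by
      by_contra h
      exact hsb (mem_visits.2 ⟨hsF, h⟩)
    have hiff : s • x ∈ P₁ ↔ σ s = 0 := by
      have := Finset.ext_iff.1 hJu s
      simpa [visits, hsJ, hsF] using this
    rw [mem_preimage]
    rcases Fin.exists_fin_two.1 ⟨σ s, rfl⟩ with h | h
    · rw [h]
      exact hsA.resolve_right fun h2 => Set.disjoint_left.1 hdisj (hiff.2 h) (hAP₂ h2)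
    · rw [h]
      refine hsA.resolve_left fun h1 => ?_
      have := hiff.1 (hAP₁ h1)
      rw [h] at this
      simp at this
  · have h := Finset.le_card_sdiff b J
    have h' : (J.card : ℝ) ≤ (J \ b).card + b.card := by
      exact_mod_cast Nat.sub_le_iff_le_add.1 h
    linarith

lemma phiConst_le_card (μ : Measure X) [IsProbabilityMeasure μ] {k : ℕ} (A : Fin k → Set X)
    {δ : ℝ} (hδ : 0 < δ) (F : Finset G) : phiConst μ A δ F ≤ F.card := by
  have h : phiConst μ A δ F ≤ maxIndep A (fun _ : G => (univ : Set X)) F :=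
    Nat.sInf_le ⟨univ, MeasurableSet.univ, by simpa using hδ.le, rfl⟩
  exact h.trans (csSup_le' (card_mem_upperBounds_indep A _ F))

/-- A uniform lower bound for `phiConst` along all nonempty finite sets bounds the lower
independence density. -/
lemma le_lowerIndepDens (hamen : FolnerAmenable G) (μ : Measure X) [IsProbabilityMeasure μ]
    {k : ℕ} (A : Fin k → Set X) {d δ : ℝ} (hδ : 0 < δ)
    (h : ∀ F : Finset G, F.Nonempty → d * F.card ≤ phiConst μ A δ F) :
    d ≤ lowerIndepDens G μ A := by
  have hinf : ∀ (r : {d : ℝ // 0 < d}) (K : Finset G) (δ : {d : ℝ // 0 < d}),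
      sInf ((fun F : Finset G => (phiConst μ A r.1 F : ℝ) / (F.card : ℝ)) ''
        {F : Finset G | FolnerInv K δ.1 F}) ≤ 1 := by
    intro r K δ
    obtain ⟨F, hF⟩ := hamen K δ.1 δ.2
    refine csInf_le_of_le ⟨0, ?_⟩ ⟨F, hF, rfl⟩ ?_
    · rintro _ ⟨F', -, rfl⟩
      positivity
    · refine div_le_one_of_le₀ ?_ (Nat.cast_nonneg _)
      exact_mod_cast phiConst_le_card μ A r.2 F
  have hne : Nonempty {d : ℝ // 0 < d} := ⟨⟨1, one_pos⟩⟩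
  have hK : ∀ (r : {d : ℝ // 0 < d}) (K : Finset G), (⨆ δ : {d : ℝ // 0 < d},
      sInf ((fun F : Finset G => (phiConst μ A r.1 F : ℝ) / (F.card : ℝ)) ''
        {F : Finset G | FolnerInv K δ.1 F})) ≤ 1 := fun r K => ciSup_le (hinf r K)
  have hr : ∀ r : {d : ℝ // 0 < d},
      invLiminf (fun F : Finset G => (phiConst μ A r.1 F : ℝ)) ≤ 1 := fun r => ciSup_le (hK r)
  refine le_trans ?_ (le_ciSup (f := fun r : {d : ℝ // 0 < d} =>
    invLiminf (fun F : Finset G => (phiConst μ A r.1 F : ℝ)))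
    ⟨1, by rintro _ ⟨r, rfl⟩; exact hr r⟩ ⟨δ, hδ⟩)
  refine le_trans ?_ (le_ciSup ⟨1, by rintro _ ⟨K, rfl⟩; exact hK ⟨δ, hδ⟩ K⟩ (∅ : Finset G))
  refine le_trans ?_ (le_ciSup ⟨1, by rintro _ ⟨r, rfl⟩; exact hinf ⟨δ, hδ⟩ ∅ r⟩ ⟨1, one_pos⟩)
  obtain ⟨F, hF⟩ := hamen ∅ 1 one_pos
  refine le_csInf ⟨_, F, hF, rfl⟩ ?_
  rintro _ ⟨F', hF', rfl⟩
  rw [le_div_iff₀ (by exact_mod_cast hF'.1.card_pos)]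
  exact h F' hF'.1

lemma le_phiConst (μ : Measure X) [IsProbabilityMeasure μ] {k : ℕ} (A : Fin k → Set X)
    {d δ : ℝ} (hδ : 0 < δ) (F : Finset G)
    (h : ∀ D : Set X, MeasurableSet D → 1 - δ ≤ μ.real D → ∃ J : Finset G, J ⊆ F ∧
      IndepRel A (fun _ : G => D) (J : Set G) ∧ d ≤ J.card) :
    d ≤ phiConst μ A δ F := by
  obtain ⟨D, hD, hDδ, heq⟩ : phiConst μ A δ F ∈ {m : ℕ | ∃ D : Set X, MeasurableSet D ∧
      1 - δ ≤ (μ D).toReal ∧ m = maxIndep A (fun _ : G => D) F} :=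
    Nat.sInf_mem ⟨_, univ, MeasurableSet.univ, by simpa using hδ.le, rfl⟩
  obtain ⟨J, hJF, hJ, hd⟩ := h D hD hDδ
  refine hd.trans ?_
  rw [heq]
  refine Nat.cast_le.2 (le_csSup ⟨F.card, card_mem_upperBounds_indep A _ F⟩ ⟨J, hJ, ?_⟩)
  rw [Set.inter_eq_right.2 (Finset.coe_subset.2 hJF), Set.ncard_coe_finset]

end Counting

/-- Lemma: a two-element Borel partition with positive entropy yields pairs of subsets
with positive lower `μ`-independence density after removing small pieces. -/
theorem stmt4 {G X : Type*} [Group G] [TopologicalSpace X] [CompactSpace X] [T2Space X]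
    [MulAction G X] [ContinuousConstSMul G X] [MeasurableSpace X] [BorelSpace X]
    (hamen : FolnerAmenable G)
    (μ : Measure X) [IsProbabilityMeasure μ] (hinv : InvariantMeasure G μ)
    (P₁ P₂ : Set X) (hP₁ : MeasurableSet P₁) (hP₂ : MeasurableSet P₂)
    (hdisj : Disjoint P₁ P₂) (hcov : P₁ ∪ P₂ = Set.univ)
    (hent : 0 < invLimsup (fun F : Finset G => HJoin μ ![P₁, P₂] F)) :
    ∃ ε : ℝ, 0 < ε ∧
      ∀ A₁ A₂ : Set X, MeasurableSet A₁ → MeasurableSet A₂ → A₁ ⊆ P₁ → A₂ ⊆ P₂ →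
        (μ (P₁ \ A₁)).toReal < ε → (μ (P₂ \ A₂)).toReal < ε →
        0 < lowerIndepDens G μ ![A₁, A₂] := by
  have hact : ∀ s : G, Measurable fun x : X => s • x := fun s =>
    (continuous_const_smul s).measurable
  simp only [HJoin_eq_joinEntropy μ hdisj hcov] at hent
  set c := invLimsup (fun F : Finset G => joinEntropy μ P₁ F)
  obtain ⟨τ₀, hτ₀, hτ⟩ := exists_binary_entropy_bound (half_pos hent)
  obtain ⟨η, hη, hcount⟩ := exists_card_small_subsets_le G (show 0 < c / 4 by positivity)
  set τ := min τ₀ 1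
  have hτ0 : 0 < τ := lt_min hτ₀ one_pos
  refine ⟨η / 2 * (τ / 2) / 2, by positivity, ?_⟩
  intro A₁ A₂ hA₁ hA₂ hAP₁ hAP₂ hε₁ hε₂
  have hA : μ.real (A₁ ∪ A₂)ᶜ ≤ η / 2 * (τ / 2) := by
    have hsub : (A₁ ∪ A₂)ᶜ ⊆ (P₁ \ A₁) ∪ (P₂ \ A₂) := by
      intro x hx
      rw [mem_compl_iff, mem_union, not_or] at hx
      exact (Set.eq_univ_iff_forall.1 hcov x).imp (fun h => ⟨h, hx.1⟩) fun h => ⟨h, hx.2⟩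
    have h1 := measureReal_mono (μ := μ) hsub
    have h2 := measureReal_union_le (μ := μ) (P₁ \ A₁) (P₂ \ A₂)
    rw [← measureReal_def] at hε₁ hε₂
    linarith
  refine (half_pos hη).trans_le (le_lowerIndepDens hamen μ _ (half_pos hτ0) fun F hF => ?_)
  refine le_phiConst μ _ (half_pos hτ0) F fun D hD hDτ => ?_
  refine exists_indepRel_of_joinEntropy hact hinv hP₁ hdisj hη (min_le_right τ₀ 1)
    (fun q hq0 hq => hτ q hq0 (hq.trans (min_le_left _ _))) hF
    (invLimsup_mul_card_le_joinEntropy hact hinv hP₁ hF) (hcount F) hA₁ hA₂ hAP₁ hAP₂ hA hD ?_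
  rw [probReal_compl_eq_one_sub hD]
  linarith
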